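/- For every finite training set S ⊆ ℝ^d × {−1,+1}, every ε ∈ (0,∞], and every r with 0 < r ≤ ε, there exists an artificial set S' ⊆ S_r with |S'| = |S|·(d+1) such that every f ∈ R_ε(S ∪ S') satisfies γ_f(S,S') > 0. -/

import Mathlib

open scoped RealInnerProductSpace ENNReal Classical
open Metric Set MeasureTheory

noncomputable section

/-- `ℝ^d` with the Euclidean (ℓ²) structure. -/
abbrev Euc (d : ℕ) := EuclideanSpace ℝ (Fin d)

/-- `X₊`: the set of points of `T` with label `1`. -/
def posPts {d : ℕ} (T : Set (Euc d × ℝ)) : Set (Euc d) := {x | (x, (1 : ℝ)) ∈ T}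

/-- `X₋`: the set of points of `T` with label `-1`. -/
def negPts {d : ℕ} (T : Set (Euc d × ℝ)) : Set (Euc d) := {x | (x, (-1 : ℝ)) ∈ T}

/-- All labels in `T` are `±1`, i.e. `T ⊆ ℝ^d × {-1, +1}`. -/
def LabelsPM {d : ℕ} (T : Set (Euc d × ℝ)) : Prop := ∀ p ∈ T, p.2 = 1 ∨ p.2 = -1

/-- `(w, b)` is a linear separator of the labeled set `T`:
`w ≠ 0` and `y(⟨w,x⟩ + b) ≥ 0` for all `(x,y) ∈ T`. -/
def IsLinSep {d : ℕ} (w : Euc d) (b : ℝ) (T : Set (Euc d × ℝ)) : Prop :=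
  w ≠ 0 ∧ ∀ p ∈ T, p.2 * (⟪w, p.1⟫ + b) ≥ 0

/-- The hyperplane `H = {x | ⟨w,x⟩ + b = 0}` associated with `(w, b)`. -/
def hyperplane {d : ℕ} (w : Euc d) (b : ℝ) : Set (Euc d) := {x | ⟪w, x⟫ + b = 0}

/-- The margin `γ_{(w,b)}(S)`: infimum over `(x,y) ∈ S` of the distance from `x`
to the hyperplane of `(w,b)`. -/
def linMargin {d : ℕ} (S : Set (Euc d × ℝ)) (w : Euc d) (b : ℝ) : ℝ :=
  ⨅ p : S, Metric.infDist (p : Euc d × ℝ).1 (hyperplane w b)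

/-- `γ` is the max-margin of `S`: attained by some linear separator of `S`, and an upper
bound on the margin of every linear separator of `S`. -/
def IsMaxMargin {d : ℕ} (S : Set (Euc d × ℝ)) (γ : ℝ) : Prop :=
  (∃ w b, IsLinSep w b S ∧ linMargin S w b = γ) ∧
    ∀ w b, IsLinSep w b S → linMargin S w b ≤ γ

/-- The worst-case margin `α(S,S')` (an extended real): the infimum over all linear
separators of `S ∪ S'` of their margin on `S`, or `-∞` if no separator exists. -/
def alpha {d : ℕ} (S S' : Set (Euc d × ℝ)) : EReal :=
  if ∃ w b, IsLinSep w b (S ∪ S') then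
    sInf {m : EReal | ∃ w b, IsLinSep w b (S ∪ S') ∧ m = ((linMargin S w b : ℝ) : EReal)}
  else ⊥

/-- `S_r`: the set of labeled points obtained by moving a point of `S` by distance at
most `r`, keeping its label; i.e. `((X₊)_r × {1}) ∪ ((X₋)_r × {-1})`. -/
def ballAug {d : ℕ} (S : Set (Euc d × ℝ)) (r : ℝ) : Set (Euc d × ℝ) :=
  {p | (p.2 = 1 ∧ Metric.infDist p.1 (posPts S) ≤ r) ∨
       (p.2 = -1 ∧ Metric.infDist p.1 (negPts S) ≤ r)}

/-- A `{±1}`-valued classifier. -/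
def IsClassifier {d : ℕ} (f : Euc d → ℝ) : Prop := ∀ x, f x = 1 ∨ f x = -1

/-- `f` separates the labeled set `T`: `f x = y` for all `(x,y) ∈ T`. -/
def Separates {d : ℕ} (f : Euc d → ℝ) (T : Set (Euc d × ℝ)) : Prop :=
  ∀ p ∈ T, f p.1 = p.2

/-- The circumradius of `A`: the radius of the smallest closed ball containing `A`
(as an extended nonnegative real). -/
def circumradius {d : ℕ} (A : Set (Euc d)) : ℝ≥0∞ :=
  ⨅ c : Euc d, ⨆ x ∈ A, edist c x

/-- `f` is `ε`-respectful of `T`: `f = 1` on the convex hull of any subset of `X₊(T)` of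
circumradius at most `ε`, and `f = -1` on the convex hull of any subset of `X₋(T)` of
circumradius at most `ε`. (Taking `ε = ⊤` gives respectful classifiers.) -/
def RespectfulOf {d : ℕ} (ε : ℝ≥0∞) (f : Euc d → ℝ) (T : Set (Euc d × ℝ)) : Prop :=
  (∀ A ⊆ posPts T, circumradius A ≤ ε → ∀ x ∈ convexHull ℝ A, f x = 1) ∧
  (∀ B ⊆ negPts T, circumradius B ≤ ε → ∀ x ∈ convexHull ℝ B, f x = -1)

/-- `R_ε(T)`, the set of `ε`-respectful classifiers of `T`. -/
def respectfulSet {d : ℕ} (ε : ℝ≥0∞) (T : Set (Euc d × ℝ)) : Set (Euc d → ℝ) :=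
  {f | IsClassifier f ∧ RespectfulOf ε f T}

/-- The margin `γ_f(S)` of a classifier `f` on `S`:
`min_{(x,y) ∈ S} d(x, f⁻¹(-y))`. -/
def clsMargin {d : ℕ} (f : Euc d → ℝ) (S : Set (Euc d × ℝ)) : ℝ :=
  ⨅ p : S, Metric.infDist (p : Euc d × ℝ).1 (f ⁻¹' {-(p : Euc d × ℝ).2})

/-- `γ_f(S,S')`: the margin of `f` on `S` if `f` separates `S ∪ S'`, and `-∞` otherwise. -/
def clsMarginAug {d : ℕ} (f : Euc d → ℝ) (S S' : Set (Euc d × ℝ)) : EReal :=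
  if Separates f (S ∪ S') then ((clsMargin f S : ℝ) : EReal) else ⊥

/-- The distance `d(P, Q) = inf {d(a,b) | a ∈ P, b ∈ Q}` between two sets,
as an extended nonnegative real. -/
def setSepDist {d : ℕ} (P Q : Set (Euc d)) : ℝ≥0∞ :=
  ⨅ a ∈ P, EMetric.infEdist a Q

/-- The uniform (rotation-invariant) probability measure on the sphere of radius `r`
centered at the origin in `ℝ^d`, obtained by normalizing the surface measure induced by
Lebesgue measure on the unit sphere and pushing forward by scaling by `r`. -/
def uniformSphere (d : ℕ) (r : ℝ) : Measure (Euc d) :=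
  (((volume : Measure (Euc d)).toSphere) Set.univ)⁻¹ •
    ((((volume : Measure (Euc d)).toSphere).map (Subtype.val)).map (fun x => r • x))

end

/-!
Around every training point, the added points are the vertices of a small copy of one fixed simplex
with the origin in its interior. These vertices lie within `r ≤ ε` of the training point, so a
respectful classifier is constant on the simplex, hence on a ball whose radius `ρ` does not depend
on the training point, and its margin is at least `ρ`. As `S` is finite, the simplex can be taken so
small that its copies at distinct points are disjoint, which gives the exact cardinality.
-/

open scoped Topology Pointwise

section Translates

variable {M L : Type*}

theorem exists_mem_nhds_zero_injOn_add [AddLeftCancelMonoid M] [TopologicalSpace M]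
    [ContinuousAdd M] [T2Space M] {X : Set M} (hX : X.Finite) :
    ∃ U ∈ 𝓝 (0 : M), (X ×ˢ U).InjOn fun p => p.1 + p.2 := by
  have eventually_ne : ∀ᶠ u : M × M in 𝓝 0 ×ˢ 𝓝 0, ∀ q ∈ X.offDiag, q.1 + u.1 ≠ q.2 + u.2 := by
    rw [← nhds_prod_eq, Filter.eventually_all_finite hX.offDiag]
    rintro ⟨x, x'⟩ ⟨-, -, hne⟩
    have isOpen_ne : IsOpen {u : M × M | x + u.1 ≠ x' + u.2} :=
      isOpen_ne_fun (by fun_prop) (by fun_prop)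
    exact isOpen_ne.mem_nhds (by simpa using hne)
  obtain ⟨U, hU, add_ne⟩ := Filter.eventually_prod_self_iff'.1 eventually_ne
  refine ⟨U, hU, ?_⟩
  rintro ⟨x, u⟩ ⟨hx, hu⟩ ⟨x', u'⟩ ⟨hx', hu'⟩ hadd
  obtain rfl : x = x' := by
    by_contra hne
    exact add_ne u hu u' hu' (x, x') ⟨hx, hx', hne⟩ hadd
  exact congrArg (Prod.mk x) (add_left_cancel hadd)

/-- The labeled points obtained by displacing each point of `S` by each vector of `V`, keeping its
label. With `V` the vertices of a small simplex this is the artificial set `S'`. -/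
def labeledTranslates [Add M] (S : Set (M × L)) (V : Set M) : Set (M × L) :=
  image2 (fun p v => (p.1 + v, p.2)) S V

theorem ncard_labeledTranslates [Add M] {S : Set (M × L)} {V : Set M}
    (hinj : ((Prod.fst '' S) ×ˢ V).InjOn fun p => p.1 + p.2) :
    (labeledTranslates S V).ncard = S.ncard * V.ncard := by
  rw [labeledTranslates, ← image_prod, InjOn.ncard_image, ncard_prod]
  rintro ⟨⟨x, y⟩, v⟩ ⟨hp, hv⟩ ⟨⟨x', y'⟩, v'⟩ ⟨hp', hv'⟩ heq
  obtain ⟨hadd, rfl⟩ := Prod.mk.inj heq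
  obtain ⟨rfl, rfl⟩ := Prod.mk.inj <|
    hinj (mk_mem_prod (mem_image_of_mem _ hp) hv) (mk_mem_prod (mem_image_of_mem _ hp') hv') hadd
  rfl

end Translates

section Respectful

variable {d : ℕ} {S T : Set (Euc d × ℝ)} {V : Set (Euc d)} {f : Euc d → ℝ} {ε : ℝ≥0∞} {r ρ : ℝ}

theorem LabelsPM.labeledTranslates (hS : LabelsPM S) (V : Set (Euc d)) :
    LabelsPM (labeledTranslates S V) := by
  rintro _ ⟨p, hp, v, -, rfl⟩
  exact hS p hp

theorem labeledTranslates_subset_ballAug (hS : LabelsPM S) (hV : V ⊆ closedBall 0 r) :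
    labeledTranslates S V ⊆ ballAug S r := by
  rintro _ ⟨⟨x, y⟩, hp, v, hv, rfl⟩
  have hdist : dist (x + v) x ≤ r := by simpa using hV hv
  obtain rfl | rfl : y = 1 ∨ y = -1 := hS _ hp
  · exact Or.inl ⟨rfl, (infDist_le_dist_of_mem (s := posPts S) hp).trans hdist⟩
  · exact Or.inr ⟨rfl, (infDist_le_dist_of_mem (s := negPts S) hp).trans hdist⟩

theorem circumradius_le_of_subset_closedBall {A : Set (Euc d)} {c : Euc d}
    (hA : A ⊆ closedBall c r) : circumradius A ≤ ENNReal.ofReal r :=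
  iInf_le_of_le c <| iSup₂_le fun x hx => by
    rw [edist_dist, dist_comm]
    exact ENNReal.ofReal_le_ofReal (hA hx)

theorem RespectfulOf.eq_of_mem_convexHull (hf : RespectfulOf ε f T) {y : ℝ} (hy : y = 1 ∨ y = -1)
    {A : Set (Euc d)} (hA : ∀ a ∈ A, (a, y) ∈ T) (hAε : circumradius A ≤ ε) {z : Euc d}
    (hz : z ∈ convexHull ℝ A) : f z = y := by
  rcases hy with rfl | rfl
  · exact hf.1 A hA hAε z hz
  · exact hf.2 A hA hAε z hz

theorem RespectfulOf.separates (hf : RespectfulOf ε f T) (hT : LabelsPM T) : Separates f T := by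
  intro p hp
  have hcirc : circumradius {p.1} ≤ ENNReal.ofReal 0 :=
    circumradius_le_of_subset_closedBall closedBall_zero.ge
  exact hf.eq_of_mem_convexHull (hT p hp) (by simpa using hp) (hcirc.trans (by simp))
    (subset_convexHull ℝ _ rfl)

theorem RespectfulOf.eq_of_mem_ball (hf : RespectfulOf ε f T) (hS : LabelsPM S)
    (hST : labeledTranslates S V ⊆ T) (hV : V ⊆ closedBall 0 r) (hrε : ENNReal.ofReal r ≤ ε)
    (hρ : ball 0 ρ ⊆ convexHull ℝ V) {p : Euc d × ℝ} (hp : p ∈ S) {z : Euc d}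
    (hz : z ∈ ball p.1 ρ) : f z = p.2 := by
  have hvertices : p.1 +ᵥ V ⊆ closedBall p.1 r := by
    simpa using vadd_set_mono (a := p.1) hV
  have hhull : ball p.1 ρ ⊆ convexHull ℝ (p.1 +ᵥ V) := by
    simpa [convexHull_vadd] using vadd_set_mono (a := p.1) hρ
  refine hf.eq_of_mem_convexHull (hS p hp) ?_
    ((circumradius_le_of_subset_closedBall hvertices).trans hrε) (hhull hz)
  rintro _ ⟨v, hv, rfl⟩
  exact hST ⟨p, hp, v, hv, rfl⟩

theorem le_clsMargin (hS : LabelsPM S) (hpos : (posPts S).Nonempty) (hneg : (negPts S).Nonempty)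
    (hsep : Separates f S) (hball : ∀ p ∈ S, ∀ z ∈ ball p.1 ρ, f z = p.2) : ρ ≤ clsMargin f S := by
  obtain ⟨xpos, hxpos⟩ := hpos
  obtain ⟨xneg, hxneg⟩ := hneg
  have : Nonempty S := ⟨⟨_, hxpos⟩⟩
  refine le_ciInf fun ⟨⟨x, y⟩, hp⟩ => ?_
  have hy : y = 1 ∨ y = -1 := hS _ hp
  -- The distance to an empty set would be the junk value `0`.
  have opposite_nonempty : (f ⁻¹' {-y}).Nonempty := by
    rcases hy with rfl | rfl
    · exact ⟨xneg, hsep _ hxneg⟩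
    · exact ⟨xpos, by simpa using hsep _ hxpos⟩
  refine (le_infDist opposite_nonempty).2 fun z hz => ?_
  by_contra! hlt
  have heq : -y = y := hz.symm.trans (hball _ hp z (mem_ball'.2 hlt))
  rcases hy with rfl | rfl <;> norm_num at heq

end Respectful

/-- Theorem 15 of the paper: for any `S`, `ε ∈ (0,∞]` and
`0 < r ≤ ε`, there is `S' ⊆ S_r` with `|S'| = |S|(d+1)` such that every
`f ∈ R_ε(S ∪ S')` has positive margin `γ_f(S,S') > 0`. -/
theorem sufficient_augmentation_positive_margin {d : ℕ} (S : Set (Euc d × ℝ))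
    (hSfin : S.Finite) (hSlab : LabelsPM S)
    (hpos : (posPts S).Nonempty) (hneg : (negPts S).Nonempty)
    (ε : ℝ≥0∞) (hε : 0 < ε) (r : ℝ) (hr : 0 < r) (hrε : ENNReal.ofReal r ≤ ε) :
    ∃ S' : Set (Euc d × ℝ), S' ⊆ ballAug S r ∧ S'.Finite ∧
      S'.ncard = S.ncard * (d + 1) ∧
      ∀ f ∈ respectfulSet ε (S ∪ S'), 0 < clsMarginAug f S S' := by
  obtain ⟨U, hU, hinj⟩ := exists_mem_nhds_zero_injOn_add (hSfin.image Prod.fst)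
  obtain ⟨b, hb, hbU⟩ :=
    exists_mem_interior_convexHull_affineBasis (Filter.inter_mem hU (closedBall_mem_nhds 0 hr))
  obtain ⟨ρ, hρ, hball⟩ := Metric.mem_nhds_iff.1 (mem_interior_iff_mem_nhds.1 hb)
  obtain ⟨hVU, hVr⟩ := subset_inter_iff.1 ((subset_convexHull ℝ (range b)).trans hbU)
  refine ⟨labeledTranslates S (range b), labeledTranslates_subset_ballAug hSlab hVr,
    hSfin.image2 _ (finite_range b), ?_, fun f hf => ?_⟩
  · rw [ncard_labeledTranslates (hinj.mono (prod_mono_right hVU)),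
      ncard_range_of_injective b.ind.injective, Nat.card_fin, finrank_euclideanSpace_fin]
  · have hsep : Separates f (S ∪ labeledTranslates S (range b)) :=
      hf.2.separates fun p hp => hp.elim (hSlab p) (hSlab.labeledTranslates _ p)
    have hmargin : ρ ≤ clsMargin f S :=
      le_clsMargin hSlab hpos hneg (fun p hp => hsep p (Or.inl hp)) fun p hp z hz =>
        hf.2.eq_of_mem_ball hSlab subset_union_right hVr hrε hball hp hz
    rw [clsMarginAug, if_pos hsep]
    exact_mod_cast hρ.trans_le hmargin
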